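/- arXiv:2002.11292 — 2 statements merged into one kernel-verified Lean document; each statement's English description precedes it below -/
import Mathlib

section
/- For every integer n, γ_n(D^{BR}_n(X;ℤ)) = D^{BR_U}_n(X;ℤ); consequently γ_n induces an isomorphism of abelian groups C^{BR}_n(X;ℤ)/D^{BR}_n(X;ℤ) ≅ C^{BR_U}_n(X;ℤ)/D^{BR_U}_n(X;ℤ). -/
open FreeAbelianGroup
open scoped TensorProduct

namespace GAlex

variable {G M A : Type*} [Group G] [AddCommGroup M] [DistribMulAction Gᵐᵒᵖ M] [AddCommGroup A]

/-- The right action `m · g` of a group element `g : G` on `m : M`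
(coming from the right `ℤ[G]`-module structure on `M`). -/
def ract (m : M) (g : G) : M := MulOpposite.op g • m

variable (φ : G →* G)

/-- The operation `(m,g) ⊳ (n,h) = (mh + n(φ(h) − h), h⁻¹gh)` of the `G`-Alexander biquandle. -/
def under (x y : M × G) : M × G :=
  (ract x.1 y.2 + ract y.1 (φ y.2) - ract y.1 y.2, y.2⁻¹ * x.2 * y.2)

/-- The operation `(m,g) ⊚ (n,h) = (mφ(h), g)` of the `G`-Alexander biquandle. -/
def overOp (x y : M × G) : M × G := (ract x.1 (φ y.2), x.2)

/-- The face `g_{⟨p⟩}` (delete the `p`-th entry). -/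
def dGdel (n : ℕ) (p : Fin (n + 1)) (g : Fin (n + 1) → G) : Fin n → G :=
  fun j => g (p.succAbove j)

/-- The face `g_{⟨⊲p⟩}` (conjugate the first entries by `g p` and delete the `p`-th entry). -/
def dGconj (n : ℕ) (p : Fin (n + 1)) (g : Fin (n + 1) → G) : Fin n → G :=
  fun j => if (j : ℕ) < (p : ℕ) then (g p)⁻¹ * g j.castSucc * g p else g j.succ

/-- The face `m_{⟨p⟩}` (merge the two entries adjacent to position `p`;
for `p = 0` drop the first entry). -/
def dMmer (n : ℕ) (p : Fin (n + 1)) (m : Fin (n + 1) → M) : Fin n → M :=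
  fun j =>
    if (j : ℕ) + 1 < (p : ℕ) then m j.castSucc
    else if (j : ℕ) + 1 = (p : ℕ) then m j.castSucc + m j.succ
    else m j.succ

/-- The face `m_{⟨⊲p⟩}`. -/
def dMconj (n : ℕ) (p : Fin (n + 1)) (g : Fin (n + 1) → G) (m : Fin (n + 1) → M) : Fin n → M :=
  fun j =>
    if (j : ℕ) + 1 < (p : ℕ) then ract (m j.castSucc) (g p)
    else if (j : ℕ) + 1 = (p : ℕ) then ract (m j.castSucc) (g p) + ract (m j.succ) (φ (g p))
    else ract (m j.succ) (φ (g p))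

/-- The boundary map `∂^{BR_U}_{n+1} : C^{BR_U}_{n+1}(X;ℤ) → C^{BR_U}_n(X;ℤ)`
(the boundary `∂^{BR_U}_k` is `0` for `k ≤ 1`, which agrees with this formula at `n = 0`). -/
def dBRU (n : ℕ) :
    FreeAbelianGroup ((Fin (n + 1) → G) × (Fin (n + 1) → M)) →+
      FreeAbelianGroup ((Fin n → G) × (Fin n → M)) :=
  FreeAbelianGroup.lift fun x =>
    ∑ p : Fin (n + 1),
      (-1 : ℤ) ^ (p : ℕ) •
        (FreeAbelianGroup.of (dGdel n p x.1, dMmer n p x.2) -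
          FreeAbelianGroup.of (dGconj n p x.1, dMconj φ n p x.1 x.2))

/-- The birack boundary map `∂^{BR}_{n+1} : C^{BR}_{n+1}(X;ℤ) → C^{BR}_n(X;ℤ)`
for the `G`-Alexander biquandle `X = M × G` (with trivial `X`-set). -/
def dBR (n : ℕ) :
    FreeAbelianGroup (Fin (n + 1) → M × G) →+ FreeAbelianGroup (Fin n → M × G) :=
  FreeAbelianGroup.lift fun x =>
    ∑ p : Fin (n + 1),
      (-1 : ℤ) ^ (p : ℕ) •
        (FreeAbelianGroup.of (fun j => x (p.succAbove j)) -
          FreeAbelianGroup.of (fun j : Fin n =>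
            if (j : ℕ) < (p : ℕ) then under φ (x j.castSucc) (x p)
            else overOp φ (x j.succ) (x p)))

/-- `γ_n((m₁,g₁),…,(m_n,g_n)) = (g₁,…,g_n; m₁−m₂, …, m_{n−1}−m_n, m_n)`. -/
def gammaMap (n : ℕ) :
    FreeAbelianGroup (Fin n → M × G) →+ FreeAbelianGroup ((Fin n → G) × (Fin n → M)) :=
  FreeAbelianGroup.lift fun x =>
    FreeAbelianGroup.of
      (fun j => (x j).2,
       fun j => (x j).1 - if h : (j : ℕ) + 1 < n then (x ⟨(j : ℕ) + 1, h⟩).1 else 0)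

/-- `r_n(g₁,…,g_n; m₁,…,m_n) = ((m₁+⋯+m_n, g₁), (m₂+⋯+m_n, g₂), …, (m_n, g_n))`. -/
def rMap (n : ℕ) :
    FreeAbelianGroup ((Fin n → G) × (Fin n → M)) →+ FreeAbelianGroup (Fin n → M × G) :=
  FreeAbelianGroup.lift fun p =>
    FreeAbelianGroup.of fun j => ((∑ i ∈ Finset.Ici j, p.2 i), p.1 j)

/-- The boundary map `∂^{BR_U}_{d+1}` of `C^{BR_U}_*(X;ℤ)_X` (the version with `X`-set `X`,
whose degree-`d` chain group is free on `(1+d)`-tuples); it is `0` in degrees `≤ 1`. -/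
def dBRUX : (d : ℕ) →
    FreeAbelianGroup ((Fin (d + 2) → G) × (Fin (d + 2) → M)) →+
      FreeAbelianGroup ((Fin (d + 1) → G) × (Fin (d + 1) → M))
  | 0 => 0
  | d + 1 =>
    FreeAbelianGroup.lift fun x =>
      ∑ i : Fin (d + 2),
        (-1 : ℤ) ^ (i : ℕ) •
          (FreeAbelianGroup.of (dGdel (d + 2) i.succ x.1, dMmer (d + 2) i.succ x.2) -
            FreeAbelianGroup.of (dGconj (d + 2) i.succ x.1, dMconj φ (d + 2) i.succ x.1 x.2))

/-- The boundary map `∂^{BR}_{d+1}` of `C^{BR}_*(X;ℤ)_X` (the version with `X`-set `X`);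
it is `0` in degrees `≤ 1`. -/
def dBRX : (d : ℕ) →
    FreeAbelianGroup (Fin (d + 2) → M × G) →+ FreeAbelianGroup (Fin (d + 1) → M × G)
  | 0 => 0
  | d + 1 =>
    FreeAbelianGroup.lift fun x =>
      ∑ i : Fin (d + 2),
        (-1 : ℤ) ^ (i : ℕ) •
          (FreeAbelianGroup.of (fun j => x (i.succ.succAbove j)) -
            FreeAbelianGroup.of (fun j : Fin (d + 2) =>
              if (j : ℕ) < (i : ℕ) + 1 then under φ (x j.castSucc) (x i.succ)
              else overOp φ (x j.succ) (x i.succ)))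


/-- The degenerate subgroup `D^{BR}_n(X;ℤ)` of `C^{BR}_n(X;ℤ)` (which is `0` for `n ≤ 1`). -/
def DBRsub : (n : ℕ) → AddSubgroup (FreeAbelianGroup (Fin n → M × G))
  | 0 => ⊥
  | 1 => ⊥
  | n + 2 =>
    AddSubgroup.closure
      ({z | ∃ (x : Fin (n + 2) → M × G) (i : Fin (n + 2)) (h : (i : ℕ) + 1 < n + 2),
          (x i).1 = (x ⟨(i : ℕ) + 1, h⟩).1 ∧ z = FreeAbelianGroup.of x} ∪
        {z | ∃ (x : Fin (n + 2) → M × G) (i : Fin (n + 2)) (m : M) (g h : G),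
          z = FreeAbelianGroup.of (Function.update x i (m, g * h)) -
              FreeAbelianGroup.of (Function.update x i (m, g)) -
              FreeAbelianGroup.of fun j : Fin (n + 2) =>
                if (j : ℕ) < (i : ℕ) then under φ (x j) (m, g)
                else if j = i then overOp φ (m, h) (m, g)
                else overOp φ (x j) (m, g)})

/-- The degenerate subgroup `D^{BR_U}_n(X;ℤ)` of `C^{BR_U}_n(X;ℤ)` (which is `0` for `n ≤ 1`). -/
def DBRUsub : (n : ℕ) → AddSubgroup (FreeAbelianGroup ((Fin n → G) × (Fin n → M)))
  | 0 => ⊥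
  | 1 => ⊥
  | n + 2 =>
    AddSubgroup.closure
      ({z | ∃ (g : Fin (n + 2) → G) (m : Fin (n + 2) → M) (i : Fin (n + 2)),
          (i : ℕ) + 1 < n + 2 ∧ m i = 0 ∧ z = FreeAbelianGroup.of (g, m)} ∪
        {z | ∃ (g : Fin (n + 2) → G) (m : Fin (n + 2) → M) (i : Fin (n + 2)) (h : G),
          z = FreeAbelianGroup.of (Function.update g i (g i * h), m) -
              FreeAbelianGroup.of (g, m) -
              FreeAbelianGroup.of
                ((fun j : Fin (n + 2) => if (j : ℕ) < (i : ℕ) then (g i)⁻¹ * g j * g i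
                    else if j = i then h else g j),
                 (fun j : Fin (n + 2) => if (j : ℕ) < (i : ℕ) then ract (m j) (g i)
                    else ract (m j) (φ (g i))))})

/-- The map on bases underlying `gammaMap`. -/
def gFun (n : ℕ) (x : Fin n → M × G) : (Fin n → G) × (Fin n → M) :=
  (fun j => (x j).2,
   fun j => (x j).1 - if h : (j : ℕ) + 1 < n then (x ⟨(j : ℕ) + 1, h⟩).1 else 0)

theorem gammaMap_of (n : ℕ) (x : Fin n → M × G) :
    gammaMap n (FreeAbelianGroup.of x) = FreeAbelianGroup.of (gFun n x) := by
  simp [gammaMap, gFun]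

theorem gFun_inj (n : ℕ) : Function.Injective (gFun (G := G) (M := M) n) := by
  intro x y hxy
  have h1 : ∀ j, (x j).2 = (y j).2 := fun j => congrFun (congrArg Prod.fst hxy) j
  have h2 : ∀ j : Fin n, (x j).1 - (if h : (j : ℕ) + 1 < n then (x ⟨(j : ℕ) + 1, h⟩).1 else 0)
      = (y j).1 - (if h : (j : ℕ) + 1 < n then (y ⟨(j : ℕ) + 1, h⟩).1 else 0) :=
    fun j => congrFun (congrArg Prod.snd hxy) j
  have h3 : ∀ k : ℕ, ∀ j : Fin n, (j : ℕ) + k + 1 = n → (x j).1 = (y j).1 := by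
    intro k
    induction k with
    | zero =>
      intro j hj
      have := h2 j
      have hn : ¬ ((j : ℕ) + 1 < n) := by omega
      simpa [hn] using this
    | succ k ih =>
      intro j hj
      have := h2 j
      have hn : (j : ℕ) + 1 < n := by omega
      rw [dif_pos hn, dif_pos hn, ih ⟨(j : ℕ) + 1, hn⟩ (by simp only; omega)] at this
      exact sub_left_injective this
  funext j
  exact Prod.ext (h3 (n - 1 - j) j (by omega)) (h1 j)

theorem gFun_surj (n : ℕ) : Function.Surjective (gFun (G := G) (M := M) n) := by
  rintro ⟨g, m⟩
  refine ⟨fun j => (∑ i ∈ Finset.Ici j, m i, g j), ?_⟩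
  refine Prod.ext rfl ?_
  funext j
  simp only [gFun]
  split_ifs with h
  · have : Finset.Ici j = insert j (Finset.Ici (⟨(j : ℕ) + 1, h⟩ : Fin n)) := by
      ext a
      simp only [Finset.mem_Ici, Finset.mem_insert, Fin.le_def, Fin.ext_iff]
      omega
    rw [this, Finset.sum_insert (by simp [Fin.le_def])]
    simp
  · have : Finset.Ici j = {j} := by
      ext a
      simp only [Finset.mem_Ici, Finset.mem_singleton, Fin.le_def, Fin.ext_iff]
      omega
    rw [this]
    simp

theorem gammaMap_bij (n : ℕ) : Function.Bijective (gammaMap (G := G) (M := M) n) := by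
  let e := Equiv.ofBijective _ ⟨gFun_inj (G := G) (M := M) n, gFun_surj n⟩
  have : gammaMap (G := G) (M := M) n = (FreeAbelianGroup.equivOfEquiv e).toAddMonoidHom := by
    apply FreeAbelianGroup.lift_ext
    intro x
    rw [gammaMap_of]
    exact (FreeAbelianGroup.map_of_apply x).symm
  rw [this]
  exact (FreeAbelianGroup.equivOfEquiv e).bijective

theorem ract_sub (a b : M) (g : G) : ract (a - b) g = ract a g - ract b g := smul_sub _ _ _

theorem ract_zero (g : G) : ract (0 : M) g = 0 := smul_zero _

theorem gFun_update (n : ℕ) (x : Fin n → M × G) (i : Fin n) (k : G) :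
    gFun n (Function.update x i ((x i).1, k)) =
      (Function.update (gFun n x).1 i k, (gFun n x).2) := by
  have hx : ∀ j, (Function.update x i ((x i).1, k) j).1 = (x j).1 := by
    intro j
    by_cases hj : j = i
    · subst hj; simp
    · simp [hj]
  refine Prod.ext ?_ ?_
  · funext j
    by_cases hj : j = i
    · subst hj; simp [gFun]
    · simp [gFun, hj]
  · funext j
    simp only [gFun, hx]

theorem gFun_third (n : ℕ) (x : Fin n → M × G) (i : Fin n) (h : G) :
    gFun n (fun j : Fin n => if (j : ℕ) < (i : ℕ) then under φ (x j) (x i)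
                else if j = i then overOp φ ((x i).1, h) (x i)
                else overOp φ (x j) (x i)) =
      ((fun j : Fin _ => if (j : ℕ) < (i : ℕ) then ((gFun n x).1 i)⁻¹ * (gFun n x).1 j * (gFun n x).1 i
                    else if j = i then h else (gFun n x).1 j),
       (fun j : Fin _ => if (j : ℕ) < (i : ℕ) then ract ((gFun n x).2 j) ((gFun n x).1 i)
                    else ract ((gFun n x).2 j) (φ ((gFun n x).1 i)))) := by
  have key : ∀ j : Fin n, (if (j : ℕ) < (i : ℕ) then under φ (x j) (x i)
                else if j = i then overOp φ ((x i).1, h) (x i)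
                else overOp φ (x j) (x i)).1 =
      if (j : ℕ) < (i : ℕ) then
        ract (x j).1 (x i).2 + ract (x i).1 (φ (x i).2) - ract (x i).1 (x i).2
      else ract (x j).1 (φ (x i).2) := by
    intro j
    split_ifs with h1 h2
    · rfl
    · subst h2; rfl
    · rfl
  refine Prod.ext ?_ ?_
  · funext j
    simp only [gFun]
    split_ifs <;> rfl
  · funext j
    simp only [gFun, key]
    by_cases hn : (j : ℕ) + 1 < n
    · have k2 := key ⟨(j : ℕ) + 1, hn⟩
      dsimp only at k2
      simp only [dif_pos hn, ract_sub, k2]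
      by_cases h1 : (j : ℕ) + 1 < i
      · rw [if_pos (by omega), if_pos h1, if_pos (by omega)]
        abel
      · rw [if_neg h1]
        by_cases h2 : (j : ℕ) < i
        · have : (⟨(j : ℕ) + 1, hn⟩ : Fin n) = i := by
            apply Fin.ext; simp only; omega
          rw [if_pos h2, if_pos h2, this]
          abel
        · rw [if_neg h2, if_neg h2]
    · have h2 : ¬ ((j : ℕ) < i) := by omega
      simp only [dif_neg hn, if_neg h2, sub_zero]

theorem map_D (n : ℕ) : (DBRsub φ n).map (gammaMap (G := G) (M := M) n) = DBRUsub φ n := by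
  match n with
  | 0 => exact AddSubgroup.map_bot _
  | 1 => exact AddSubgroup.map_bot _
  | n + 2 =>
    unfold DBRsub DBRUsub
    rw [AddMonoidHom.map_closure, Set.image_union]
    congr 2
    · ext z
      constructor
      · rintro ⟨_, ⟨x, i, h, hx, rfl⟩, rfl⟩
        refine ⟨(gFun _ x).1, (gFun _ x).2, i, h, ?_, gammaMap_of _ _⟩
        simp only [gFun]
        rw [dif_pos h, hx, sub_self]
      · rintro ⟨g, m, i, h, hm, rfl⟩
        obtain ⟨x, hx⟩ := gFun_surj _ (g, m)
        refine ⟨_, ⟨x, i, h, ?_, rfl⟩, by rw [gammaMap_of, hx]⟩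
        have : (gFun _ x).2 i = 0 := by rw [hx]; exact hm
        simp only [gFun] at this
        rw [dif_pos h] at this
        exact sub_eq_zero.mp this
    · have main : ∀ (x : Fin (n + 2) → M × G) (i : Fin (n + 2)) (h : G),
          gammaMap (n + 2) (FreeAbelianGroup.of (Function.update x i ((x i).1, (x i).2 * h)) -
              FreeAbelianGroup.of x -
              FreeAbelianGroup.of fun j : Fin (n + 2) =>
                if (j : ℕ) < (i : ℕ) then under φ (x j) (x i)
                else if j = i then overOp φ ((x i).1, h) (x i)
                else overOp φ (x j) (x i)) =
          FreeAbelianGroup.of (Function.update (gFun _ x).1 i ((gFun _ x).1 i * h), (gFun _ x).2) -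
              FreeAbelianGroup.of ((gFun _ x).1, (gFun _ x).2) -
              FreeAbelianGroup.of
        ((fun j : Fin _ => if (j : ℕ) < (i : ℕ) then ((gFun _ x).1 i)⁻¹ * (gFun _ x).1 j * (gFun _ x).1 i
                    else if j = i then h else (gFun _ x).1 j),
         (fun j : Fin _ => if (j : ℕ) < (i : ℕ) then ract ((gFun _ x).2 j) ((gFun _ x).1 i)
                    else ract ((gFun _ x).2 j) (φ ((gFun _ x).1 i)))) := by
        intro x i h
        rw [map_sub, map_sub, gammaMap_of, gammaMap_of, gammaMap_of, gFun_update, gFun_third]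
        rfl
      ext z
      constructor
      · rintro ⟨_, ⟨x, i, m, g, h, rfl⟩, rfl⟩
        refine ⟨(gFun _ (Function.update x i (m, g))).1, (gFun _ (Function.update x i (m, g))).2,
          i, h, ?_⟩
        rw [← main]
        congr 2
        · simp
        · congr 1
          funext j
          by_cases hj : j = i
          · subst hj; simp
          · simp [hj]
      · rintro ⟨g, m, i, h, rfl⟩
        obtain ⟨x, hx⟩ := gFun_surj _ (g, m)
        refine ⟨_, ⟨x, i, (x i).1, (x i).2, h, rfl⟩, ?_⟩
        have := main x i h
        rw [hx] at this
        rw [← this]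
        simp

/-- `γ_n(D^{BR}_n(X;ℤ)) = D^{BR_U}_n(X;ℤ)` for every `n`; consequently
`γ_n` induces an isomorphism of the quotients
`C^{BR}_n(X;ℤ)/D^{BR}_n(X;ℤ) ≅ C^{BR_U}_n(X;ℤ)/D^{BR_U}_n(X;ℤ)`. -/
theorem gamma_degenerate_and_induced_iso (hφ : ∀ g : G, φ g ∈ Subgroup.center G) :
    (∀ n : ℕ, (DBRsub φ n).map (gammaMap (G := G) (M := M) n) = DBRUsub φ n) ∧
      (∀ n : ℕ,
        ∃ e : (FreeAbelianGroup (Fin n → M × G) ⧸ DBRsub φ n) ≃+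
            (FreeAbelianGroup ((Fin n → G) × (Fin n → M)) ⧸ DBRUsub φ n),
          ∀ z : FreeAbelianGroup (Fin n → M × G),
            e (QuotientAddGroup.mk z) = QuotientAddGroup.mk (gammaMap n z)) := by
  refine ⟨map_D φ, fun n => ?_⟩
  refine ⟨QuotientAddGroup.congr _ _ (AddEquiv.ofBijective (gammaMap n) (gammaMap_bij n))
    (map_D φ n), fun z => rfl⟩

end GAlex
end

section
/- Let λ : G → A be a group homomorphism. Then for every n, ψ_{n,λ}(D^{BR_U}_n(X;ℤ)) is contained in the image of D^{gp}_n(M;ℤ)_G ⊗_ℤ A in C^{gp}_n(M;ℤ)_G ⊗_ℤ A; hence ψ_{n,λ} induces a homomorphism C^{BR_U}_n(X;ℤ)/D^{BR_U}_n(X;ℤ) → (C^{gp}_n(M;ℤ)_G/D^{gp}_n(M;ℤ)_G) ⊗_ℤ A. -/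
open FreeAbelianGroup
open scoped TensorProduct

namespace GAlex

variable {G M A : Type*} [Group G] [AddCommGroup M] [DistribMulAction Gᵐᵒᵖ M] [AddCommGroup A]

variable (φ : G →* G)

/-- The subgroup of `G`-coinvariants relations in `C^{gp}_n(M;ℤ)`:
generated by all `(m₁g,…,m_ng) − (m₁,…,m_n)`. -/
def coinvSub (n : ℕ) : AddSubgroup (FreeAbelianGroup (Fin n → M)) :=
  AddSubgroup.closure
    {z | ∃ (m : Fin n → M) (g : G),
        z = FreeAbelianGroup.of (fun i => ract (m i) g) - FreeAbelianGroup.of m}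

/-- The coinvariant group chain group `C^{gp}_n(M;ℤ)_G`. -/
abbrev CgpG (n : ℕ) : Type _ :=
  FreeAbelianGroup (Fin n → M) ⧸ coinvSub (G := G) (M := M) n

/-- The group-homology boundary map `∂^{gp}_{n+1} : C^{gp}_{n+1}(M;ℤ) → C^{gp}_n(M;ℤ)`
(it is `0` in degrees `≤ 1`, which agrees with this formula at `n = 0`). -/
def dgp (n : ℕ) :
    FreeAbelianGroup (Fin (n + 1) → M) →+ FreeAbelianGroup (Fin n → M) :=
  FreeAbelianGroup.lift fun m =>
    (∑ p : Fin (n + 1), (-1 : ℤ) ^ (p : ℕ) • FreeAbelianGroup.of (dMmer n p m)) +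
      (-1 : ℤ) ^ (n + 1) • FreeAbelianGroup.of fun j : Fin n => m j.castSucc

/-- `|k| = k₁ + ⋯ + k_n`. -/
def wt {n : ℕ} (k : Fin n → Bool) : ℕ := ∑ i, if k i then 1 else 0

/-- `g_{k,i} = φ(g₀^{k₀} ⋯ g_i^{k_i}) · g_{i+1}^{k_{i+1}} ⋯ g_{n-1}^{k_{n-1}}`
(indices written `0`-based; the products are ordered). -/
def gki {n : ℕ} (g : Fin n → G) (k : Fin n → Bool) (i : Fin n) : G :=
  φ ((((List.finRange n).filter fun j => decide (j ≤ i)).map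
        fun j => if k j then g j else 1).prod) *
    (((List.finRange n).filter fun j => decide (i < j)).map
        fun j => if k j then g j else 1).prod

/-- The value of `ψ` on a generator:
`Σ_{k, k₀ = 0} (−1)^{|k|} (m₀ g_{k,0}, …, m_n g_{k,n})`, as an element of the free
abelian group (before passing to coinvariants). -/
def psiVal (n : ℕ) (x : (Fin (n + 1) → G) × (Fin (n + 1) → M)) :
    FreeAbelianGroup (Fin (n + 1) → M) :=
  ∑ k ∈ Finset.univ.filter fun k : Fin (n + 1) → Bool => k 0 = false,
    (-1 : ℤ) ^ wt k • FreeAbelianGroup.of fun i => ract (x.2 i) (gki φ x.1 k i)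

/-- `ψ` as a homomorphism into the free abelian group (before coinvariants). -/
def psiFree (n : ℕ) :
    FreeAbelianGroup ((Fin (n + 1) → G) × (Fin (n + 1) → M)) →+
      FreeAbelianGroup (Fin (n + 1) → M) :=
  FreeAbelianGroup.lift (psiVal φ n)

/-- The homomorphism `ψ : C^{BR_U} → C^{gp}(M;ℤ)_G`. -/
def psiG (n : ℕ) :
    FreeAbelianGroup ((Fin (n + 1) → G) × (Fin (n + 1) → M)) →+
      CgpG (G := G) (M := M) (n + 1) :=
  (QuotientAddGroup.mk' (coinvSub (G := G) (M := M) (n + 1))).comp (psiFree φ n)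

/-- The homomorphism `ψ_{•,λ}`, sending a generator `x` to `ψ(x) ⊗ λ(x₁)` where `x₁` is the
first `G`-entry of `x`. -/
noncomputable def psiLam (lam : G → A) (n : ℕ) :
    FreeAbelianGroup ((Fin (n + 1) → G) × (Fin (n + 1) → M)) →+
      TensorProduct ℤ (CgpG (G := G) (M := M) (n + 1)) A :=
  FreeAbelianGroup.lift fun x =>
    (QuotientAddGroup.mk' (coinvSub (G := G) (M := M) (n + 1)) (psiVal φ n x)) ⊗ₜ[ℤ]
      lam (x.1 0)

/-- `D^{gp}_n(M;ℤ)_G`: the image in the coinvariants of the subgroup generated by tuples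
with a vanishing entry in a position `1 ≤ i ≤ n−1`. -/
def DgpGsub (n : ℕ) : AddSubgroup (CgpG (G := G) (M := M) n) :=
  (AddSubgroup.closure
      {z : FreeAbelianGroup (Fin n → M) |
        ∃ (m : Fin n → M) (i : Fin n),
          (i : ℕ) + 1 < n ∧ m i = 0 ∧ z = FreeAbelianGroup.of m}).map
    (QuotientAddGroup.mk' (coinvSub (G := G) (M := M) n))

/-- The image of `D^{gp}_n(M;ℤ)_G ⊗_ℤ A` in `C^{gp}_n(M;ℤ)_G ⊗_ℤ A`: the subgroup generated
by the pure tensors `d ⊗ a` with `d ∈ D^{gp}_n(M;ℤ)_G`. -/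
noncomputable def imageDgpA (n : ℕ) : AddSubgroup (TensorProduct ℤ (CgpG (G := G) (M := M) n) A) :=
  AddSubgroup.closure
    {z | ∃ d ∈ DgpGsub (G := G) (M := M) n, ∃ a : A, z = d ⊗ₜ[ℤ] a}


def ee {n : ℕ} (g : Fin n → G) (k : Fin n → Bool) (j : Fin n) : G := if k j then g j else 1

theorem list_mem {n : ℕ} (i : Fin n) (a : G) (e f : Fin n → G)
    (h1 : ∀ l, l < i → e l = a⁻¹ * f l * a) (h2 : f i = a * e i) (h3 : ∀ l, i < l → e l = f l)
    (L : List (Fin n)) (hL : L.Pairwise (· < ·)) (hi : i ∈ L) :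
    a * (L.map e).prod = (L.map f).prod := by
  induction L with
  | nil => simp at hi
  | cons x L ih =>
    rw [List.pairwise_cons] at hL
    rcases lt_trichotomy x i with hx | hx | hx
    · have hi' : i ∈ L := by
        rcases List.mem_cons.1 hi with h | h
        · exact absurd h hx.ne'
        · exact h
      rw [List.map_cons, List.map_cons, List.prod_cons, List.prod_cons, ← ih hL.2 hi', h1 x hx]
      group
    · subst hx
      have : L.map e = L.map f := List.map_congr_left fun l hl => h3 l (hL.1 l hl)
      rw [List.map_cons, List.map_cons, List.prod_cons, List.prod_cons, this, h2, mul_assoc]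
    · exfalso
      rcases List.mem_cons.1 hi with h | h
      · exact absurd h hx.ne
      · exact absurd (hL.1 i h) hx.not_gt

theorem pw {n : ℕ} (p : Fin n → Bool) : ((List.finRange n).filter p).Pairwise (· < ·) :=
  List.Pairwise.filter _ (List.pairwise_lt_finRange n)

theorem gki_rel (hφ : ∀ g : G, φ g ∈ Subgroup.center G) {n : ℕ} (i : Fin n) (a : G)
    (g g' : Fin n → G) (k k' : Fin n → Bool)
    (h1 : ∀ l, l < i → ee g k l = a⁻¹ * ee g' k' l * a) (h2 : ee g' k' i = a * ee g k i)
    (h3 : ∀ l, i < l → ee g k l = ee g' k' l) (j : Fin n) :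
    (if (j : ℕ) < (i : ℕ) then a else φ a) * gki φ g k j = gki φ g' k' j := by
  have hc : ∀ x y : G, y * φ x = φ x * y := fun x y => Subgroup.mem_center_iff.1 (hφ x) y
  change _ * (φ ((List.map (ee g k) _).prod) * (List.map (ee g k) _).prod) =
    (φ ((List.map (ee g' k') _).prod) * (List.map (ee g' k') _).prod)
  split_ifs with hj
  · have hj' : j < i := hj
    rw [← mul_assoc, hc, mul_assoc, list_mem i a _ _ h1 h2 h3 _ (pw _) (by simp [hj'])]
    congr 1
    rw [map_list_prod, map_list_prod, List.map_map, List.map_map]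
    congr 1
    apply List.map_congr_left
    intro l hl
    have hl' : l ≤ j := by simpa using hl
    simp only [Function.comp]
    rw [h1 l (hl'.trans_lt hj'), map_mul, map_mul, hc, ← mul_assoc, ← map_mul]
    simp
  · have hj' : i ≤ j := not_lt.1 hj
    rw [← mul_assoc, ← map_mul, list_mem i a _ _ h1 h2 h3 _ (pw _) (by simp [hj'])]
    congr 2
    apply List.map_congr_left
    intro l hl
    have hl' : j < l := by simpa using hl
    exact h3 l (hj'.trans_lt hl')

theorem ract_ract (m : M) (a b : G) : ract (ract m a) b = ract m (a * b) := by
  simp [ract, mul_smul]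

theorem sgn_flip {n : ℕ} (k : Fin n → Bool) (i : Fin n) (hk : k i = false) :
    (-1 : ℤ) ^ wt (Function.update k i true) = - (-1 : ℤ) ^ wt k := by
  have : wt (Function.update k i true) = wt k + 1 := by
    unfold wt
    rw [← Finset.add_sum_erase _ _ (Finset.mem_univ i), ← Finset.add_sum_erase _ (fun j => if k j then 1 else 0) (Finset.mem_univ i)]
    have : ∀ j ∈ Finset.univ.erase i, (if Function.update k i true j then 1 else 0) = if k j then 1 else 0 := by
      intro j hj
      rw [Function.update_of_ne (Finset.ne_of_mem_erase hj)]
    rw [Finset.sum_congr rfl this]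
    simp [hk, add_comm]
  rw [this, pow_succ]; simp

theorem psi_rel (hφ : ∀ g : G, φ g ∈ Subgroup.center G) (n : ℕ) (g : Fin (n + 1) → G)
    (m : Fin (n + 1) → M) (i : Fin (n + 1)) (hi : i ≠ 0) (h : G) :
    psiVal φ n (Function.update g i (g i * h), m) - psiVal φ n (g, m) -
      psiVal φ n ((fun j => if (j : ℕ) < (i : ℕ) then (g i)⁻¹ * g j * g i
                    else if j = i then h else g j),
                 (fun j => if (j : ℕ) < (i : ℕ) then ract (m j) (g i)
                    else ract (m j) (φ (g i)))) = 0 := by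
  unfold psiVal
  rw [← Finset.sum_sub_distrib, ← Finset.sum_sub_distrib]
  dsimp only
  set g1 := Function.update g i (g i * h) with hg1
  set g3 : Fin (n + 1) → G := fun j => if (j : ℕ) < (i : ℕ) then (g i)⁻¹ * g j * g i
                    else if j = i then h else g j with hg3
  have hV : ∀ (k k' : Fin (n + 1) → Bool) (g' : Fin (n + 1) → G)
      (_ : ∀ l, l < i → ee g3 k l = (g i)⁻¹ * ee g' k' l * g i)
      (_ : ee g' k' i = g i * ee g3 k i)
      (_ : ∀ l, i < l → ee g3 k l = ee g' k' l),
      (fun j : Fin (n + 1) => ract (if (j : ℕ) < (i : ℕ) then ract (m j) (g i) else ract (m j) (φ (g i)))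
        (gki φ g3 k j)) = fun j => ract (m j) (gki φ g' k' j) := by
    intro k k' g' h1 h2 h3
    funext j
    rw [← gki_rel φ hφ i (g i) g3 g' k k' h1 h2 h3 j]
    split_ifs <;> rw [ract_ract]
  have key : ∀ k : Fin (n + 1) → Bool, k i = false →
      ((-1 : ℤ) ^ wt k • FreeAbelianGroup.of (fun j => ract (m j) (gki φ g1 k j)) -
        (-1 : ℤ) ^ wt k • FreeAbelianGroup.of (fun j => ract (m j) (gki φ g k j)) -
        (-1 : ℤ) ^ wt k • FreeAbelianGroup.of (fun j : Fin (n + 1) => ract (if (j : ℕ) < (i : ℕ) then ract (m j) (g i) else ract (m j) (φ (g i)))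
        (gki φ g3 k j))) +
      ((-1 : ℤ) ^ wt (Function.update k i true) • FreeAbelianGroup.of (fun j => ract (m j) (gki φ g1 (Function.update k i true) j)) -
        (-1 : ℤ) ^ wt (Function.update k i true) • FreeAbelianGroup.of (fun j => ract (m j) (gki φ g (Function.update k i true) j)) -
        (-1 : ℤ) ^ wt (Function.update k i true) • FreeAbelianGroup.of (fun j : Fin (n + 1) => ract (if (j : ℕ) < (i : ℕ) then ract (m j) (g i) else ract (m j) (φ (g i)))
        (gki φ g3 (Function.update k i true) j))) = 0 := by
    intro k hk
    have e1 : ∀ j, gki φ g1 k j = gki φ g k j := by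
      intro j
      have : ee g1 k = ee g k := by
        funext l
        unfold ee
        by_cases hl : l = i
        · subst hl; simp [hk]
        · rw [hg1, Function.update_of_ne hl]
      change φ ((List.map (ee g1 k) _).prod) * (List.map (ee g1 k) _).prod =
        φ ((List.map (ee g k) _).prod) * (List.map (ee g k) _).prod
      rw [this]
    have e2 := hV k (Function.update k i true) g
      (by
        intro l hl
        have hl' : (l : ℕ) < i := hl
        unfold ee
        rw [Function.update_of_ne hl.ne]
        by_cases hkl : k l = true <;> simp [hkl, hg3, hl])
      (by simp [ee, hk])
      (by
        intro l hl
        have hl' : ¬ ((l : ℕ) < i) := by simpa using hl.le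
        unfold ee
        rw [Function.update_of_ne hl.ne']
        simp [hg3, hl.ne', hl.not_gt])
    have e3 := hV (Function.update k i true) (Function.update k i true) g1
      (by
        intro l hl
        have hl' : (l : ℕ) < i := hl
        unfold ee
        rw [Function.update_of_ne hl.ne, hg1, Function.update_of_ne hl.ne]
        by_cases hkl : k l = true <;> simp [hkl, hg3, hl])
      (by simp [ee, hg1, hg3])
      (by
        intro l hl
        have hl' : ¬ ((l : ℕ) < i) := by simpa using hl.le
        unfold ee
        rw [Function.update_of_ne hl.ne', hg1, Function.update_of_ne hl.ne']
        simp [hg3, hl.ne', hl.not_gt])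
    rw [e2, e3, sgn_flip k i hk]
    simp only [e1, neg_smul]
    abel
  apply Finset.sum_involution (fun k _ => Function.update k i (!(k i)))
  · intro k _
    cases hk : k i
    · exact key k hk
    · have := key (Function.update k i false) (by simp)
      rw [Function.update_idem, ← hk, Function.update_eq_self] at this
      exact (add_comm _ _).trans this
  · intro k _ _ hh
    have := congrFun hh i
    simp at this
  · intro k _
    simp
  · intro k hk
    simp only [Finset.mem_filter, Finset.mem_univ, true_and] at hk ⊢
    rw [Function.update_of_ne hi.symm, hk]

theorem gki_congr {n : ℕ} {g g' : Fin n → G} {k : Fin n → Bool} (h : ee g k = ee g' k)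
    (j : Fin n) : gki φ g k j = gki φ g' k j := by
  change φ ((List.map (ee g k) _).prod) * (List.map (ee g k) _).prod =
        φ ((List.map (ee g' k) _).prod) * (List.map (ee g' k) _).prod
  rw [h]

theorem psiVal_congr (n : ℕ) (g g' : Fin (n + 1) → G) (m : Fin (n + 1) → M)
    (h : ∀ l, l ≠ 0 → g l = g' l) : psiVal φ n (g, m) = psiVal φ n (g', m) := by
  unfold psiVal
  apply Finset.sum_congr rfl
  intro k hk
  simp only [Finset.mem_filter, Finset.mem_univ, true_and] at hk
  have : ee g k = ee g' k := by
    funext l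
    unfold ee
    by_cases hl : l = 0
    · subst hl; simp [hk]
    · rw [h l hl]
  simp only [gki_congr φ this]

theorem psi_coinv (hφ : ∀ g : G, φ g ∈ Subgroup.center G) (n : ℕ) (g : Fin (n + 1) → G)
    (m : Fin (n + 1) → M) (a : G) :
    QuotientAddGroup.mk' (coinvSub (G := G) (M := M) (n + 1))
      (psiVal φ n (g, fun j => ract (m j) (φ a))) =
    QuotientAddGroup.mk' (coinvSub (G := G) (M := M) (n + 1)) (psiVal φ n (g, m)) := by
  unfold psiVal
  rw [map_sum, map_sum]
  apply Finset.sum_congr rfl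
  intro k _
  rw [map_zsmul, map_zsmul]
  congr 1
  symm
  refine QuotientAddGroup.eq.2 ?_
  rw [neg_add_eq_sub]
  apply AddSubgroup.subset_closure
  refine ⟨fun i => ract (m i) (gki φ g k i), φ a, ?_⟩
  congr 2
  funext j
  rw [ract_ract, ract_ract, Subgroup.mem_center_iff.1 (hφ a)]

theorem psi_deg (n : ℕ) (g : Fin (n + 1) → G) (m : Fin (n + 1) → M) (i : Fin (n + 1))
    (hi : (i : ℕ) + 1 < n + 1) (hm : m i = 0) :
    QuotientAddGroup.mk' (coinvSub (G := G) (M := M) (n + 1)) (psiVal φ n (g, m)) ∈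
      DgpGsub (G := G) (M := M) (n + 1) := by
  apply AddSubgroup.mem_map_of_mem
  apply AddSubgroup.sum_mem
  intro k _
  apply AddSubgroup.zsmul_mem
  apply AddSubgroup.subset_closure
  exact ⟨_, i, hi, by simp [hm, ract], rfl⟩

theorem part1 (hφ : ∀ g : G, φ g ∈ Subgroup.center G)
    (lam : G → A) (hlam : ∀ g h : G, lam (g * h) = lam g + lam h) 
    (n : ℕ) (z : FreeAbelianGroup ((Fin (n + 1) → G) × (Fin (n + 1) → M)))
    (hz : z ∈ DBRUsub φ (n + 1)) :
    psiLam φ lam n z ∈ imageDgpA (G := G) (M := M) (A := A) (n + 1) := by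
  cases n with
  | zero =>
    have : z = 0 := hz
    rw [this, map_zero]
    exact AddSubgroup.zero_mem _
  | succ n =>
    have hle : DBRUsub (M := M) φ (n + 2) ≤ (imageDgpA (G := G) (M := M) (A := A) (n + 2)).comap
        (psiLam φ lam (n + 1)) := by
      refine (AddSubgroup.closure_le _).2 ?_
      rintro z (⟨g, m, i, hi, hm, rfl⟩ | ⟨g, m, i, h, rfl⟩)
      · rw [SetLike.mem_coe, AddSubgroup.mem_comap]
        rw [psiLam, FreeAbelianGroup.lift_apply_of]
        exact AddSubgroup.subset_closure ⟨_, psi_deg φ (n + 1) g m i hi hm, _, rfl⟩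
      · rw [SetLike.mem_coe, AddSubgroup.mem_comap]
        have h0 : ∀ w, w = 0 → w ∈ imageDgpA (G := G) (M := M) (A := A) (n + 2) := by
          rintro _ rfl; exact AddSubgroup.zero_mem _
        apply h0
        rw [psiLam, map_sub, map_sub, FreeAbelianGroup.lift_apply_of,
          FreeAbelianGroup.lift_apply_of, FreeAbelianGroup.lift_apply_of]
        by_cases hi : i = 0
        · subst hi
          have c1 := psiVal_congr φ (n + 1) (Function.update g 0 (g 0 * h)) g m
            (fun l hl => Function.update_of_ne hl _ _)
          have c2 := psiVal_congr φ (n + 1)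
            (fun j : Fin (n + 2) => if j = 0 then h else g j) g (fun j => ract (m j) (φ (g 0)))
            (fun l hl => if_neg hl)
          simp only [Fin.val_zero, not_lt_zero, if_false]
          rw [c1, c2, psi_coinv φ hφ, ← TensorProduct.tmul_sub, ← TensorProduct.tmul_sub]
          simp [hlam]
        · have h1 : lam 1 = 0 := by simpa using hlam 1 1
          have hinv : lam (g i)⁻¹ = - lam (g i) := by
            have := hlam (g i)⁻¹ (g i)
            rw [inv_mul_cancel, h1] at this
            exact eq_neg_of_add_eq_zero_left this.symm
          have hp : 0 < (i : ℕ) := Nat.pos_of_ne_zero fun hh => hi (Fin.ext hh)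
          have l3 : lam (if ((0 : Fin (n + 2)) : ℕ) < (i : ℕ) then (g i)⁻¹ * g 0 * g i
              else if 0 = i then h else g 0) = lam (g 0) := by
            rw [if_pos (by simpa using hp), hlam, hlam, hinv]; abel
          dsimp only
          rw [l3, Function.update_of_ne (Ne.symm hi), ← TensorProduct.sub_tmul,
            ← TensorProduct.sub_tmul, ← map_sub, ← map_sub, psi_rel φ hφ _ g m i hi h,
            map_zero, TensorProduct.zero_tmul]
    exact hle hz

/-- For a group homomorphism `λ : G → A`, the map `ψ_{n,λ}` carries
`D^{BR_U}_n(X;ℤ)` into the image of `D^{gp}_n(M;ℤ)_G ⊗_ℤ A` in `C^{gp}_n(M;ℤ)_G ⊗_ℤ A`;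
hence it induces a homomorphism between the corresponding quotients. -/
theorem psiLam_degenerate (hφ : ∀ g : G, φ g ∈ Subgroup.center G)
    (lam : G → A) (hlam : ∀ g h : G, lam (g * h) = lam g + lam h) :
    (∀ (n : ℕ) (z : FreeAbelianGroup ((Fin (n + 1) → G) × (Fin (n + 1) → M))),
        z ∈ DBRUsub φ (n + 1) →
          psiLam φ lam n z ∈ imageDgpA (G := G) (M := M) (A := A) (n + 1)) ∧
      (∀ n : ℕ,
        ∃ F : (FreeAbelianGroup ((Fin (n + 1) → G) × (Fin (n + 1) → M)) ⧸
              DBRUsub φ (n + 1)) →+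
            (TensorProduct ℤ (CgpG (G := G) (M := M) (n + 1)) A ⧸
              imageDgpA (G := G) (M := M) (A := A) (n + 1)),
          ∀ z, F (QuotientAddGroup.mk z) = QuotientAddGroup.mk (psiLam φ lam n z)) := by
  refine ⟨part1 (M := M) φ hφ lam hlam, fun n => ?_⟩
  exact ⟨QuotientAddGroup.map _ _ (psiLam φ lam n) (part1 φ hφ lam hlam n), fun z => rfl⟩

end GAlex
end
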